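/- arXiv:1006.4088 — 4 statements merged into one kernel-verified Lean document; each statement's English description precedes it below -/
import Mathlib

section
/- Let A and B be matrices of the same dimensions. If A Bᵀ = 0 and Aᵀ B = 0, then ‖A + B‖_* = ‖A‖_* + ‖B‖_*. -/
open scoped BigOperators

noncomputable section

/-- Frobenius norm of a real matrix. -/
def frobNorm {n₁ n₂ : ℕ} (X : Matrix (Fin n₁) (Fin n₂) ℝ) : ℝ :=
  Real.sqrt (∑ i, ∑ j, (X i j) ^ 2)

/-- Singular values of a real matrix: square roots of eigenvalues of `X * Xᴴ`. -/
def singVals {n₁ n₂ : ℕ} (X : Matrix (Fin n₁) (Fin n₂) ℝ) : Fin n₁ → ℝ :=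
  fun i => Real.sqrt ((Matrix.isHermitian_mul_conjTranspose_self X).eigenvalues i)

/-- Nuclear norm: sum of singular values. -/
def nuclearNorm {n₁ n₂ : ℕ} (X : Matrix (Fin n₁) (Fin n₂) ℝ) : ℝ :=
  ∑ i, singVals X i

/-- Operator norm: largest singular value. -/
def matOpNorm {n₁ n₂ : ℕ} (X : Matrix (Fin n₁) (Fin n₂) ℝ) : ℝ :=
  ⨆ i, singVals X i

/-- ℓ*-rank. -/
def lstarRank {n₁ n₂ : ℕ} (X : Matrix (Fin n₁) (Fin n₂) ℝ) : ℝ :=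
  nuclearNorm X ^ 2 / frobNorm X ^ 2

/-- Euclidean norm of a vector. -/
def vnorm {m : ℕ} (v : Fin m → ℝ) : ℝ :=
  Real.sqrt (∑ k, (v k) ^ 2)

/-- Matrix inner product. -/
def matInner {n₁ n₂ : ℕ} (X Y : Matrix (Fin n₁) (Fin n₂) ℝ) : ℝ :=
  (X.transpose * Y).trace

def cmsvMin {n₁ n₂ m : ℕ} (A : Matrix (Fin n₁) (Fin n₂) ℝ → (Fin m → ℝ)) (τ : ℝ) : ℝ :=
  sInf {c | ∃ X : Matrix (Fin n₁) (Fin n₂) ℝ, X ≠ 0 ∧ lstarRank X ≤ τ ∧ c = vnorm (A X) / frobNorm X}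

def cmsvMax {n₁ n₂ m : ℕ} (A : Matrix (Fin n₁) (Fin n₂) ℝ → (Fin m → ℝ)) (τ : ℝ) : ℝ :=
  sSup {c | ∃ X : Matrix (Fin n₁) (Fin n₂) ℝ, X ≠ 0 ∧ lstarRank X ≤ τ ∧ c = vnorm (A X) / frobNorm X}

def rcsvMin {n₁ n₂ m : ℕ} (A : Matrix (Fin n₁) (Fin n₂) ℝ → (Fin m → ℝ)) (r : ℕ) : ℝ :=
  sInf {c | ∃ X : Matrix (Fin n₁) (Fin n₂) ℝ, X ≠ 0 ∧ X.rank ≤ r ∧ c = vnorm (A X) / frobNorm X}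

def rcsvMax {n₁ n₂ m : ℕ} (A : Matrix (Fin n₁) (Fin n₂) ℝ → (Fin m → ℝ)) (r : ℕ) : ℝ :=
  sSup {c | ∃ X : Matrix (Fin n₁) (Fin n₂) ℝ, X ≠ 0 ∧ X.rank ≤ r ∧ c = vnorm (A X) / frobNorm X}

def mRIC {n₁ n₂ m : ℕ} (A : Matrix (Fin n₁) (Fin n₂) ℝ → (Fin m → ℝ)) (r : ℕ) : ℝ :=
  sInf {δ : ℝ | 0 < δ ∧ ∀ X : Matrix (Fin n₁) (Fin n₂) ℝ, X ≠ 0 → X.rank ≤ r →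
    1 - δ ≤ (vnorm (A X)) ^ 2 / (frobNorm X) ^ 2 ∧ (vnorm (A X)) ^ 2 / (frobNorm X) ^ 2 ≤ 1 + δ}

def opOf {n₁ n₂ m : ℕ} (A : Fin m → Matrix (Fin n₁) (Fin n₂) ℝ) :
    Matrix (Fin n₁) (Fin n₂) ℝ → (Fin m → ℝ) :=
  fun X k => matInner (A k) X


open scoped MatrixOrder in
theorem nuclearNorm_eq_trace_sqrt {n₁ n₂ : ℕ} (X : Matrix (Fin n₁) (Fin n₂) ℝ) :
    nuclearNorm X = (CFC.sqrt (X * X.conjTranspose)).trace := by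
  have hX := Matrix.posSemidef_self_mul_conjTranspose X
  rw [CFC.sqrt_eq_cfc, cfc_nnreal_eq_real _ _ hX.nonneg, hX.1.cfc_eq, Matrix.IsHermitian.cfc,
    Unitary.conjStarAlgAut_apply, Matrix.trace_mul_comm, ← mul_assoc,
    Unitary.coe_star_mul_self, one_mul, Matrix.trace_diagonal]
  simp only [nuclearNorm, singVals, Real.sqrt, Function.comp_apply, RCLike.ofReal_real_eq_id, id]

open scoped MatrixOrder in
theorem Matrix.PosSemidef.sqrt_mul_sqrt_eq_zero {n : Type*} [Fintype n] [DecidableEq n]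
    {P Q : Matrix n n ℝ} (hP : P.PosSemidef) (hQ : Q.PosSemidef) (h : P * Q = 0) :
    CFC.sqrt P * CFC.sqrt Q = 0 := by
  have hS : (CFC.sqrt P).conjTranspose = CFC.sqrt P :=
    (Matrix.nonneg_iff_posSemidef.1 (CFC.sqrt_nonneg P)).1
  have hT : (CFC.sqrt Q).conjTranspose = CFC.sqrt Q :=
    (Matrix.nonneg_iff_posSemidef.1 (CFC.sqrt_nonneg Q)).1
  have hSQ : CFC.sqrt P * Q = 0 := by
    rw [← Matrix.conjTranspose_mul_self_mul_eq_zero, hS, CFC.sqrt_mul_sqrt_self P hP.nonneg, h]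
  rw [← Matrix.mul_self_mul_conjTranspose_eq_zero, hT, CFC.sqrt_mul_sqrt_self Q hQ.nonneg, hSQ]

open scoped MatrixOrder in
theorem Matrix.PosSemidef.sqrt_add_of_mul_eq_zero {n : Type*} [Fintype n] [DecidableEq n]
    {P Q : Matrix n n ℝ} (hP : P.PosSemidef) (hQ : Q.PosSemidef) (hPQ : P * Q = 0)
    (hQP : Q * P = 0) : CFC.sqrt (P + Q) = CFC.sqrt P + CFC.sqrt Q := by
  refine CFC.sqrt_unique ?_ (add_nonneg (CFC.sqrt_nonneg P) (CFC.sqrt_nonneg Q))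
  rw [add_mul, mul_add, mul_add, hP.sqrt_mul_sqrt_eq_zero hQ hPQ, hQ.sqrt_mul_sqrt_eq_zero hP hQP,
    CFC.sqrt_mul_sqrt_self P hP.nonneg, CFC.sqrt_mul_sqrt_self Q hQ.nonneg, add_zero, zero_add]

/-- if `A Bᵀ = 0` and `Aᵀ B = 0` then `‖A + B‖_* = ‖A‖_* + ‖B‖_*`. -/
theorem stmt3 {n₁ n₂ : ℕ} (A B : Matrix (Fin n₁) (Fin n₂) ℝ)
    (h₁ : A * B.transpose = 0) (h₂ : A.transpose * B = 0) :
    nuclearNorm (A + B) = nuclearNorm A + nuclearNorm B := by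
  have h₁' : B * A.transpose = 0 := by simpa using congrArg Matrix.transpose h₁
  have h₂' : B.transpose * A = 0 := by simpa using congrArg Matrix.transpose h₂
  have hPQ : A * A.conjTranspose * (B * B.conjTranspose) = 0 := by
    rw [Matrix.mul_assoc, ← Matrix.mul_assoc A.conjTranspose,
      Matrix.conjTranspose_eq_transpose_of_trivial A, h₂, Matrix.zero_mul, Matrix.mul_zero]
  have hQP : B * B.conjTranspose * (A * A.conjTranspose) = 0 := by
    rw [Matrix.mul_assoc, ← Matrix.mul_assoc B.conjTranspose,
      Matrix.conjTranspose_eq_transpose_of_trivial B, h₂', Matrix.zero_mul, Matrix.mul_zero]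
  have hsum : (A + B) * (A + B).conjTranspose = A * A.conjTranspose + B * B.conjTranspose := by
    simp [Matrix.add_mul, Matrix.mul_add, h₁, h₁']
  rw [nuclearNorm_eq_trace_sqrt, nuclearNorm_eq_trace_sqrt, nuclearNorm_eq_trace_sqrt, hsum,
    (Matrix.posSemidef_self_mul_conjTranspose A).sqrt_add_of_mul_eq_zero
      (Matrix.posSemidef_self_mul_conjTranspose B) hPQ hQP, Matrix.trace_add]

end
end

section
/- Let A and B be matrices of the same dimensions. Then there exist matrices B₁ and B₂ of the same dimensions such that: (1) B = B₁ + B₂; (2) rank(B₁) ≤ 2·rank(A); (3) A B₂ᵀ = 0 and Aᵀ B₂ = 0; (4) ⟨B₁, B₂⟩ = 0. -/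
open scoped BigOperators

noncomputable section

/-- The rank of matrices over a field is subadditive. -/
theorem Matrix.rank_add_le_add_rank {K m n : Type*} [Field K] [Fintype m] [Fintype n]
    (A B : Matrix m n K) : (A + B).rank ≤ A.rank + B.rank := by
  refine le_trans (Submodule.finrank_mono ?_)
    (Submodule.finrank_add_le_finrank_add_finrank A.mulVecLin.range B.mulVecLin.range)
  rw [Matrix.mulVecLin_add]
  exact LinearMap.range_add_le _ _

/-- The orthogonal projection onto the column space of a real matrix, as a matrix. -/
theorem exists_projection_onto_columnSpace {m n : Type*} [Fintype m] [Fintype n]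
    (A : Matrix m n ℝ) :
    ∃ P : Matrix m m ℝ, P.transpose = P ∧ P * P = P ∧ P * A = A ∧ P.rank ≤ A.rank := by
  classical
  have hrange : (A.transpose * A).mulVecLin.range = A.transpose.mulVecLin.range := by
    apply Submodule.eq_of_le_of_finrank_eq
    · rw [Matrix.mulVecLin_mul]
      exact LinearMap.range_comp_le_range _ _
    · exact (Matrix.rank_transpose_mul_self A).trans (Matrix.rank_transpose A).symm
  have hsolve : ∀ i, ∃ x, (A.transpose * A).mulVec x = A.transpose.mulVec (Pi.single i 1) := by
    intro i
    have h : A.transpose.mulVecLin (Pi.single i 1) ∈ (A.transpose * A).mulVecLin.range :=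
      hrange ▸ LinearMap.mem_range_self _ _
    exact h
  choose x hx using hsolve
  set X : Matrix n m ℝ := Matrix.of fun j i => x i j
  have hX : A.transpose * A * X = A.transpose := by
    ext j i
    have h := congrFun (hx i) j
    rw [Matrix.mulVec_single_one] at h
    exact h
  have hXt : X.transpose * (A.transpose * A) = A := by
    simpa [Matrix.transpose_mul] using congrArg Matrix.transpose hX
  have hP : (A * X).transpose * (A * X) = (A * X).transpose := by
    rw [Matrix.transpose_mul, Matrix.mul_assoc, ← Matrix.mul_assoc A.transpose, hX]
  have hsymm : (A * X).transpose = A * X := by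
    have h := congrArg Matrix.transpose hP
    rw [Matrix.transpose_mul, Matrix.transpose_transpose, hP] at h
    exact h
  refine ⟨A * X, hsymm, ?_, ?_, Matrix.rank_mul_le_left _ _⟩
  · rwa [hsymm] at hP
  · rw [← hsymm, Matrix.transpose_mul, Matrix.mul_assoc, hXt]

/-- the matrix decomposition lemma. -/
theorem stmt4 {n₁ n₂ : ℕ} (A B : Matrix (Fin n₁) (Fin n₂) ℝ) :
    ∃ B₁ B₂ : Matrix (Fin n₁) (Fin n₂) ℝ,
      B = B₁ + B₂ ∧ B₁.rank ≤ 2 * A.rank ∧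
      A * B₂.transpose = 0 ∧ A.transpose * B₂ = 0 ∧ matInner B₁ B₂ = 0 := by
  obtain ⟨P, hPt, hPP, hPA, hPr⟩ := exists_projection_onto_columnSpace A
  obtain ⟨Q, hQt, hQQ, hQA, hQr⟩ := exists_projection_onto_columnSpace A.transpose
  rw [Matrix.rank_transpose] at hQr
  have hAP : A.transpose * P = A.transpose := by
    simpa [Matrix.transpose_mul, hPt] using congrArg Matrix.transpose hPA
  have hAQ : A * Q = A := by
    simpa [Matrix.transpose_mul, hQt] using congrArg Matrix.transpose hQA
  refine ⟨P * B + (1 - P) * B * Q, (1 - P) * B * (1 - Q), ?_, ?_, ?_, ?_, ?_⟩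
  · rw [Matrix.mul_sub, Matrix.mul_one, Matrix.sub_mul, Matrix.one_mul]
    abel
  · have h := Matrix.rank_add_le_add_rank (P * B) ((1 - P) * B * Q)
    have h₁ := Matrix.rank_mul_le_left P B
    have h₂ := Matrix.rank_mul_le_right ((1 - P) * B) Q
    omega
  · rw [Matrix.transpose_mul, ← Matrix.mul_assoc, Matrix.transpose_sub, Matrix.transpose_one, hQt,
      Matrix.mul_sub, Matrix.mul_one, hAQ, sub_self, Matrix.zero_mul]
  · rw [← Matrix.mul_assoc, ← Matrix.mul_assoc, Matrix.mul_sub A.transpose, Matrix.mul_one, hAP, sub_self,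
      Matrix.zero_mul, Matrix.zero_mul]
  · have hP0 : P * (1 - P) = 0 := by rw [Matrix.mul_sub, Matrix.mul_one, hPP, sub_self]
    have hQ0 : (1 - Q) * Q = 0 := by rw [Matrix.sub_mul, Matrix.one_mul, hQQ, sub_self]
    have h₁ : (P * B).transpose * ((1 - P) * B * (1 - Q)) = 0 := by
      rw [Matrix.transpose_mul, hPt, Matrix.mul_assoc, ← Matrix.mul_assoc P, ← Matrix.mul_assoc P,
        hP0, Matrix.zero_mul, Matrix.zero_mul, Matrix.mul_zero]
    have h₂ : (((1 - P) * B * Q).transpose * ((1 - P) * B * (1 - Q))).trace = 0 := by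
      rw [Matrix.trace_mul_comm, Matrix.transpose_mul, hQt, Matrix.mul_assoc,
        ← Matrix.mul_assoc (1 - Q), hQ0, Matrix.zero_mul, Matrix.mul_zero, Matrix.trace_zero]
    rw [matInner, Matrix.transpose_add, Matrix.add_mul, Matrix.trace_add, h₁, h₂,
      Matrix.trace_zero, add_zero]

end
end

section
/- Let X ∈ ℝ^{n₁×n₂} have rank r, and let H ∈ ℝ^{n₁×n₂} satisfy ‖X + H‖_* ≤ ‖X‖_*. Then ‖H‖_* ≤ 2√(2r)·‖H‖_F; equivalently, if H ≠ 0 then its ℓ*-rank satisfies τ(H) ≤ 8r. -/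
open scoped BigOperators

noncomputable section

open Matrix in
/-- Polar decomposition `X = |X*| V`, with `|X*| = B * Bᵀ`. -/
theorem exists_polar {n₁ n₂ : ℕ} (X : Matrix (Fin n₁) (Fin n₂) ℝ) :
    ∃ (V : Matrix (Fin n₁) (Fin n₂) ℝ) (B : Matrix (Fin n₁) (Fin n₁) ℝ),
      B * Bᵀ * V = X ∧ V * Vᵀ * B = B ∧ V * Vᵀ * V = V ∧
      (B * Bᵀ).trace = nuclearNorm X ∧ (V * Vᵀ).trace = X.rank := by
  set hX := isHermitian_mul_conjTranspose_self X
  set l := hX.eigenvalues with hl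
  have hl0 : ∀ i, 0 ≤ l i := (posSemidef_self_mul_conjTranspose X).eigenvalues_nonneg
  set U : Matrix (Fin n₁) (Fin n₁) ℝ := ↑hX.eigenvectorUnitary
  have hUU : Uᵀ * U = 1 := by
    have := Unitary.coe_star_mul_self hX.eigenvectorUnitary
    rwa [star_eq_conjTranspose, conjTranspose_eq_transpose_of_trivial] at this
  have hspec : X * Xᵀ = U * diagonal l * Uᵀ := by
    have := hX.spectral_theorem
    rw [Unitary.conjStarAlgAut_apply] at this
    rw [← conjTranspose_eq_transpose_of_trivial X, ← conjTranspose_eq_transpose_of_trivial U]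
    exact this
  have cancel : ∀ {m : ℕ} (M : Matrix (Fin n₁) (Fin m) ℝ), Uᵀ * (U * M) = M := fun M => by
    rw [← Matrix.mul_assoc, hUU, Matrix.one_mul]
  have diagcancel : ∀ {m : ℕ} (d e : Fin n₁ → ℝ) (M : Matrix (Fin n₁) (Fin m) ℝ),
      diagonal d * (diagonal e * M) = diagonal (fun i => d i * e i) * M := fun d e M => by
    rw [← Matrix.mul_assoc, diagonal_mul_diagonal]
  set s : Fin n₁ → ℝ := fun i => √(l i) with hs
  set e : Fin n₁ → ℝ := fun i => if l i = 0 then 0 else 1 with he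
  set P := U * diagonal e * Uᵀ with hP
  have hss : ∀ i, s i * s i = l i := fun i => Real.mul_self_sqrt (hl0 i)
  have hs0 : ∀ i, l i ≠ 0 → s i ≠ 0 := fun i h => by
    intro h'
    exact h (by rw [← hss i, h', mul_zero])
  have hPX : P * X = X := by
    have h0 : (X - P * X) * (X - P * X)ᵀ = 0 := by
      have : (X - P * X) * (X - P * X)ᵀ = (1 - P) * (X * Xᵀ) * (1 - P)ᵀ := by
        simp only [Matrix.sub_mul, Matrix.mul_sub, transpose_sub, transpose_mul, transpose_one,
          Matrix.mul_one, Matrix.one_mul, Matrix.mul_assoc]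
      rw [this, hspec]
      have : (1 - P) * (U * diagonal l * Uᵀ) = 0 := by
        simp only [hP, Matrix.sub_mul, Matrix.one_mul, Matrix.mul_assoc, cancel, diagcancel]
        have : (fun i => e i * l i) = l := by
          funext i; by_cases h : l i = 0 <;> simp [he, h]
        rw [this, sub_self]
      rw [this, Matrix.zero_mul]
    rw [← conjTranspose_eq_transpose_of_trivial, self_mul_conjTranspose_eq_zero, sub_eq_zero] at h0
    exact h0.symm
  have hVV : (U * diagonal (fun i => (s i)⁻¹) * Uᵀ * X) *
      (U * diagonal (fun i => (s i)⁻¹) * Uᵀ * X)ᵀ = P := by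
    have : (U * diagonal (fun i => (s i)⁻¹) * Uᵀ * X) *
      (U * diagonal (fun i => (s i)⁻¹) * Uᵀ * X)ᵀ = (U * diagonal (fun i => (s i)⁻¹) * Uᵀ) *
        (X * Xᵀ) * (U * diagonal (fun i => (s i)⁻¹) * Uᵀ)ᵀ := by
      simp only [transpose_mul, Matrix.mul_assoc]
    rw [this, hspec]
    simp only [transpose_mul, transpose_transpose, diagonal_transpose, Matrix.mul_assoc, cancel,
      diagcancel, hP]
    congr 3
    funext i
    by_cases h : l i = 0
    · simp [he, h]
    · have := hs0 i h
      simp only [he, h, if_false]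
      rw [← hss i]
      field_simp
  refine ⟨U * diagonal (fun i => (s i)⁻¹) * Uᵀ * X, U * diagonal (fun i => √(s i)), ?_, ?_, ?_,
    ?_, ?_⟩
  · refine Eq.trans ?_ hPX
    simp only [transpose_mul, diagonal_transpose, Matrix.mul_assoc, cancel, diagcancel, hP]
    congr 3
    funext i
    by_cases h : l i = 0
    · simp [he, hs, h]
    · have := hs0 i h
      simp only [he, h, if_false]
      rw [Real.mul_self_sqrt (Real.sqrt_nonneg _), mul_inv_cancel₀ this]
  · rw [hVV]
    simp only [hP, Matrix.mul_assoc, cancel, diagonal_mul_diagonal]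
    congr 2
    funext i
    by_cases h : l i = 0 <;> simp [he, hs, h]
  · rw [hVV]
    simp only [hP, Matrix.mul_assoc, cancel, diagcancel]
    congr 3
    funext i
    by_cases h : l i = 0 <;> simp [he, hs, h]
  · rw [transpose_mul, diagonal_transpose, Matrix.mul_assoc, trace_mul_comm]
    simp only [Matrix.mul_assoc, hUU, Matrix.mul_one, diagonal_mul_diagonal, trace_diagonal]
    exact Finset.sum_congr rfl fun i _ => Real.mul_self_sqrt (Real.sqrt_nonneg _)
  · rw [hVV, hP, Matrix.mul_assoc, trace_mul_comm, Matrix.mul_assoc, hUU, Matrix.mul_one,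
      trace_diagonal, ← rank_self_mul_conjTranspose, hX.rank_eq_card_non_zero_eigs,
      Fintype.card_subtype]
    simp [he, Finset.sum_ite, hl]

open Matrix in
theorem trace_mul_transpose_of_polar {m n : ℕ} {X V : Matrix (Fin m) (Fin n) ℝ}
    {B : Matrix (Fin m) (Fin m) ℝ} (hX : B * Bᵀ * V = X) (hVB : V * Vᵀ * B = B) :
    (V * Xᵀ).trace = (B * Bᵀ).trace := by
  rw [← hX]
  simp only [transpose_mul, transpose_transpose, ← Matrix.mul_assoc, hVB]

open Matrix in
theorem one_sub_posSemidef_of_partialIsometry {m n : ℕ} {V : Matrix (Fin m) (Fin n) ℝ}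
    (hV : V * Vᵀ * V = V) : (1 - V * Vᵀ).PosSemidef := by
  have h : (1 - V * Vᵀ) * (1 - V * Vᵀ)ᴴ = 1 - V * Vᵀ := by
    simp only [conjTranspose_eq_transpose_of_trivial, transpose_sub, transpose_one, transpose_mul,
      transpose_transpose, Matrix.mul_sub, Matrix.sub_mul, Matrix.mul_one, Matrix.one_mul,
      ← Matrix.mul_assoc, hV, sub_self, Matrix.zero_mul, sub_zero]
  exact h ▸ posSemidef_self_mul_conjTranspose _

open Matrix in
theorem trace_conj_le {m n k : ℕ} {W : Matrix (Fin m) (Fin n) ℝ}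
    (hW : (1 - W * Wᵀ).PosSemidef) (B : Matrix (Fin k) (Fin m) ℝ) :
    (B * W * Wᵀ * Bᵀ).trace ≤ (B * Bᵀ).trace := by
  have := (hW.mul_mul_conjTranspose_same B).trace_nonneg
  rw [conjTranspose_eq_transpose_of_trivial, Matrix.mul_sub, Matrix.sub_mul, trace_sub,
    Matrix.mul_one, ← Matrix.mul_assoc] at this
  linarith

open Matrix in
/-- Duality between the nuclear norm and the operator norm. -/
theorem trace_mul_transpose_le_nuclearNorm {n₁ n₂ : ℕ} {W : Matrix (Fin n₁) (Fin n₂) ℝ}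
    (hW : (1 - W * Wᵀ).PosSemidef) (X : Matrix (Fin n₁) (Fin n₂) ℝ) :
    (W * Xᵀ).trace ≤ nuclearNorm X := by
  obtain ⟨V, B, hX, hVB, hV, hB, -⟩ := exists_polar X
  have h1 := trace_conj_le hW Bᵀ
  have h2 := trace_conj_le (one_sub_posSemidef_of_partialIsometry hV) Bᵀ
  have h3 := (posSemidef_self_mul_conjTranspose (Bᵀ * (W - V))).trace_nonneg
  have h4 : (Bᵀ * W * Vᵀ * B).trace = (W * Xᵀ).trace := by
    rw [← hX]
    simp only [transpose_mul, transpose_transpose, ← Matrix.mul_assoc]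
    rw [trace_mul_comm _ Bᵀ]
    simp only [← Matrix.mul_assoc]
  have h5 : (Bᵀ * V * Wᵀ * B).trace = (Bᵀ * W * Vᵀ * B).trace := by
    rw [← trace_transpose]
    simp only [transpose_mul, transpose_transpose, Matrix.mul_assoc]
  have h6 : (Bᵀ * B).trace = nuclearNorm X := by rw [trace_mul_comm, hB]
  simp only [conjTranspose_eq_transpose_of_trivial, transpose_mul, transpose_sub,
    transpose_transpose, Matrix.mul_sub, Matrix.sub_mul, trace_sub, ← Matrix.mul_assoc] at h1 h2 h3
  linarith

open Matrix in
theorem trace_mul_transpose_le_frobNorm {m n : ℕ} (M H : Matrix (Fin m) (Fin n) ℝ) :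
    (M * Hᵀ).trace ≤ √((M * Mᵀ).trace) * frobNorm H := by
  have key : ∀ A B : Matrix (Fin m) (Fin n) ℝ,
      (A * Bᵀ).trace = ∑ p : Fin m × Fin n, A p.1 p.2 * B p.1 p.2 := fun A B => by
    simp [trace, Matrix.mul_apply, Fintype.sum_prod_type]
  have := Real.sum_mul_le_sqrt_mul_sqrt Finset.univ
    (fun p : Fin m × Fin n => M p.1 p.2) (fun p => H p.1 p.2)
  rw [key, key, frobNorm]
  simpa [← sq, Fintype.sum_prod_type] using this

open Matrix in
theorem nuclearNorm_le_of_nuclearNorm_add_le {n₁ n₂ : ℕ} (X H : Matrix (Fin n₁) (Fin n₂) ℝ)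
    (hmin : nuclearNorm (X + H) ≤ nuclearNorm X) :
    nuclearNorm H ≤ (√X.rank + √(2 * X.rank)) * frobNorm H := by
  obtain ⟨V, B, hX, hVB, hV, hB, hr⟩ := exists_polar X
  have hV' : Vᵀ * V * Vᵀ = Vᵀ := by
    simpa [Matrix.mul_assoc] using congrArg transpose hV
  have hrQ : (Vᵀ * V).trace = X.rank := by rw [trace_mul_comm, hr]
  have hXV : (V * Xᵀ).trace = nuclearNorm X := by
    rw [← hB]
    exact trace_mul_transpose_of_polar hX hVB
  have hXQ : X * (Vᵀ * V) = X := by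
    rw [← hX]; simp only [Matrix.mul_assoc]; rw [← Matrix.mul_assoc V, hV]
  have hVQ : V * (Vᵀ * V) = V := by rw [← Matrix.mul_assoc, hV]
  obtain ⟨P, hP⟩ : ∃ P, P = V * Vᵀ := ⟨_, rfl⟩
  obtain ⟨Q, hQ⟩ : ∃ Q, Q = Vᵀ * V := ⟨_, rfl⟩
  have hPt : Pᵀ = P := by simp [hP]
  have hQt : Qᵀ = Q := by simp [hQ]
  have hPP : P * P = P := by rw [hP, ← Matrix.mul_assoc, hV]
  have hQQ : Q * Q = Q := by rw [hQ, ← Matrix.mul_assoc, hV']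
  rw [← hQ] at hXQ hVQ hrQ
  rw [← hP] at hr
  obtain ⟨R, hR⟩ : ∃ R, R = 1 - P := ⟨_, rfl⟩
  obtain ⟨T, hT⟩ : ∃ T, T = 1 - Q := ⟨_, rfl⟩
  have hRt : Rᵀ = R := by simp [hR, hPt]
  have hTt : Tᵀ = T := by simp [hT, hQt]
  have hRR : R * R = R := by simp [hR, Matrix.mul_sub, Matrix.sub_mul, hPP]
  have hTT : T * T = T := by simp [hT, Matrix.mul_sub, Matrix.sub_mul, hQQ]
  have hRP : R * P = 0 := by simp [hR, Matrix.sub_mul, hPP]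
  have hVT : V * T = 0 := by simp [hT, Matrix.mul_sub, hVQ]
  have hTV : T * Vᵀ = 0 := by simpa [hTt] using congrArg transpose hVT
  have hTX : T * Xᵀ = 0 := by
    have : X * T = 0 := by simp [hT, Matrix.mul_sub, hXQ]
    simpa [hTt] using congrArg transpose this
  have tr_compress : ∀ Z : Matrix (Fin n₁) (Fin n₂) ℝ,
      (R * Z * T * Hᵀ).trace = (Z * (R * H * T)ᵀ).trace := fun Z => by
    simp only [transpose_mul, hRt, hTt]
    rw [Matrix.mul_assoc, Matrix.mul_assoc, trace_mul_comm]
    simp only [Matrix.mul_assoc]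
  obtain ⟨C, D, hC, hCD, hCC, hD, -⟩ := exists_polar (R * H * T)
  have hCn : (C * (R * H * T)ᵀ).trace = nuclearNorm (R * H * T) := by
    rw [← hD]
    exact trace_mul_transpose_of_polar hC hCD
  have hcontr : (1 - (V + R * C * T) * (V + R * C * T)ᵀ).PosSemidef := by
    have h := ((one_sub_posSemidef_of_partialIsometry hCC).add
      (posSemidef_self_mul_conjTranspose (C * Q))).mul_mul_conjTranspose_same R
    convert h using 1
    have e1 : (V + R * C * T) * (V + R * C * T)ᵀ = P + R * (C * T * Cᵀ) * R := by
      simp only [transpose_add, transpose_mul, Matrix.mul_add, Matrix.add_mul, hRt, hTt,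
        Matrix.mul_assoc, hTV, ← hP]
      rw [← Matrix.mul_assoc V T, hVT, ← Matrix.mul_assoc T T, hTT]
      simp
    have e2 : C * Q * (C * Q)ᴴ = C * Q * Cᵀ := by
      rw [conjTranspose_eq_transpose_of_trivial, transpose_mul, hQt, ← Matrix.mul_assoc,
        Matrix.mul_assoc C, hQQ]
    have e3 : C * T * Cᵀ = C * Cᵀ - C * Q * Cᵀ := by
      simp [hT, Matrix.mul_sub, Matrix.sub_mul]
    rw [e1, e2, e3, conjTranspose_eq_transpose_of_trivial, hRt]
    have e4 : R * (1 - C * Cᵀ + C * Q * Cᵀ) * R = R - R * (C * Cᵀ - C * Q * Cᵀ) * R := by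
      simp only [Matrix.mul_add, Matrix.mul_sub, Matrix.sub_mul, Matrix.add_mul, Matrix.mul_one, hRR]
      abel
    rw [e4, hR]
    abel
  have hcone : nuclearNorm (R * H * T) ≤ √X.rank * frobNorm H := by
    have h1 := trace_mul_transpose_le_nuclearNorm hcontr (X + H)
    have h2 := trace_mul_transpose_le_frobNorm (-V) H
    simp only [transpose_neg, Matrix.neg_mul, Matrix.mul_neg, neg_neg, trace_neg, ← hP, hr] at h2
    simp only [transpose_add, Matrix.mul_add, Matrix.add_mul, trace_add, tr_compress, hCn, hXV]
      at h1
    rw [Matrix.mul_assoc _ T, hTX, Matrix.mul_zero, trace_zero] at h1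
    linarith
  obtain ⟨G, K, hG, hGK, hGG, hK, -⟩ := exists_polar H
  have hGn : (G * Hᵀ).trace = nuclearNorm H := by
    rw [← hK]
    exact trace_mul_transpose_of_polar hG hGK
  have hGc := one_sub_posSemidef_of_partialIsometry hGG
  have hGc' : (1 - Gᵀ * Gᵀᵀ).PosSemidef := one_sub_posSemidef_of_partialIsometry (by
    simpa [Matrix.mul_assoc] using congrArg transpose hGG)
  have hsplit : G = R * G * T + (P * G + R * G * Q) := by
    simp only [hR, hT, Matrix.mul_sub, Matrix.sub_mul, Matrix.mul_one, Matrix.one_mul]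
    abel
  have hM : ((P * G + R * G * Q) * (P * G + R * G * Q)ᵀ).trace ≤ 2 * X.rank := by
    have h1 := trace_conj_le hGc P
    have h2 := trace_conj_le hGc' Q
    have h3 := (posSemidef_self_mul_conjTranspose (P * G * Q)).trace_nonneg
    have e1 : (P * G + R * G * Q) * (P * G + R * G * Q)ᵀ =
        P * G * Gᵀ * P + R * (G * Q * Gᵀ) * R + P * (G * Q * Gᵀ * R) + R * (G * Q * Gᵀ * P) := by
      simp only [transpose_add, transpose_mul, Matrix.mul_add, Matrix.add_mul, hRt, hQt, hPt,
        Matrix.mul_assoc]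
      rw [← Matrix.mul_assoc Q Q, hQQ]
      abel
    have hPR : P * R = 0 := by simp [hR, Matrix.mul_sub, hPP]
    have e2 : (P * (G * Q * Gᵀ * R)).trace = 0 := by
      rw [trace_mul_comm, Matrix.mul_assoc, hRP, Matrix.mul_zero, trace_zero]
    have e3 : (R * (G * Q * Gᵀ * P)).trace = 0 := by
      rw [trace_mul_comm, Matrix.mul_assoc, hPR, Matrix.mul_zero, trace_zero]
    have e4 : (R * (G * Q * Gᵀ) * R).trace =
        (G * Q * Gᵀ).trace - (P * (G * Q * Gᵀ)).trace := by
      rw [trace_mul_comm, ← Matrix.mul_assoc, hRR, hR, Matrix.sub_mul, Matrix.one_mul, trace_sub]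
    have e5 : (P * G * Q * (P * G * Q)ᴴ).trace = (P * (G * Q * Gᵀ)).trace := by
      have : P * G * Q * (P * G * Q)ᴴ = P * (G * Q * Gᵀ) * P := by
        simp only [conjTranspose_eq_transpose_of_trivial, transpose_mul, hPt, hQt, Matrix.mul_assoc]
        rw [← Matrix.mul_assoc Q Q, hQQ]
      rw [this, trace_mul_comm, ← Matrix.mul_assoc, hPP]
    have e6 : (Q * Gᵀ * Gᵀᵀ * Qᵀ).trace = (G * Q * Gᵀ).trace := by
      rw [hQt, trace_mul_comm, transpose_transpose, ← Matrix.mul_assoc, ← Matrix.mul_assoc, hQQ,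
        trace_mul_comm, Matrix.mul_assoc]
    rw [e5] at h3
    rw [e6, hQt, hQQ, hrQ] at h2
    rw [hPt, hPP, hr] at h1
    rw [e1, trace_add, trace_add, trace_add, e2, e3, e4]
    linarith
  have h1 := trace_mul_transpose_le_nuclearNorm hGc (R * H * T)
  have h2 := trace_mul_transpose_le_frobNorm (P * G + R * G * Q) H
  have h3 : √(((P * G + R * G * Q) * (P * G + R * G * Q)ᵀ).trace) * frobNorm H ≤
      √(2 * X.rank) * frobNorm H :=
    mul_le_mul_of_nonneg_right (Real.sqrt_le_sqrt hM) (Real.sqrt_nonneg _)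
  have h4 : nuclearNorm H =
      (G * (R * H * T)ᵀ).trace + ((P * G + R * G * Q) * Hᵀ).trace := by
    rw [← hGn, ← tr_compress, ← trace_add, ← Matrix.add_mul, ← hsplit]
  linarith

/-- if `rank X = r` and `‖X + H‖_* ≤ ‖X‖_*`, then `‖H‖_* ≤ 2√(2r)·‖H‖_F`;
equivalently, if `H ≠ 0` then `τ(H) ≤ 8r`. -/
theorem stmt5 {n₁ n₂ : ℕ} (X H : Matrix (Fin n₁) (Fin n₂) ℝ) (r : ℕ)
    (hrank : X.rank = r) (hmin : nuclearNorm (X + H) ≤ nuclearNorm X) :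
    nuclearNorm H ≤ 2 * Real.sqrt (2 * r) * frobNorm H ∧
    (H ≠ 0 → lstarRank H ≤ 8 * r) := by
  have hF : 0 ≤ frobNorm H := Real.sqrt_nonneg _
  have hr : (0 : ℝ) ≤ r := Nat.cast_nonneg r
  have hmain : nuclearNorm H ≤ 2 * Real.sqrt (2 * r) * frobNorm H := by
    have h := nuclearNorm_le_of_nuclearNorm_add_le X H hmin
    rw [hrank] at h
    refine h.trans (mul_le_mul_of_nonneg_right ?_ hF)
    have : √(r : ℝ) ≤ √(2 * r) := Real.sqrt_le_sqrt (by linarith)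
    linarith
  refine ⟨hmain, fun _ => ?_⟩
  have hN : 0 ≤ nuclearNorm H := Finset.sum_nonneg fun i _ => Real.sqrt_nonneg _
  refine div_le_of_le_mul₀ (sq_nonneg _) (by positivity) ?_
  calc nuclearNorm H ^ 2 ≤ (2 * √(2 * r) * frobNorm H) ^ 2 := pow_le_pow_left₀ hN hmain 2
    _ = 8 * r * frobNorm H ^ 2 := by
      rw [mul_pow, mul_pow, Real.sq_sqrt (by positivity)]; ring

end
end

section
/- Suppose X ∈ ℝ^{n₁×n₂} has rank r, y = 𝒜(X) + w with ‖w‖₂ ≤ ε, and ρ_{8r}^min(𝒜) > 0. Then any solution X̂ of the matrix Basis Pursuit program min_Z ‖Z‖_* subject to ‖y − 𝒜(Z)‖₂ ≤ ε satisfies ‖X̂ − X‖_F ≤ 2ε / ρ_{8r}^min(𝒜). -/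
open scoped BigOperators

noncomputable section

section PartialIsometry

open Matrix

variable {p q s : Type*} [Fintype p] [Fintype q]

lemma trace_transpose_mul_self_nonneg (A : Matrix p q ℝ) : 0 ≤ (Aᵀ * A).trace := by
  simpa [conjTranspose_eq_transpose_of_trivial] using
    (posSemidef_conjTranspose_mul_self A).trace_nonneg

lemma trace_transpose_mul_sq_le (A B : Matrix p q ℝ) :
    (Aᵀ * B).trace ^ 2 ≤ (Aᵀ * A).trace * (Bᵀ * B).trace := by
  have expand (C D : Matrix p q ℝ) :
      (Cᵀ * D).trace = ∑ k : q × p, C k.2 k.1 * D k.2 k.1 := by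
    simp [trace, mul_apply, Fintype.sum_prod_type]
  simp only [expand, ← sq]
  exact Finset.sum_mul_sq_le_sq_mul_sq _ _ _

lemma transpose_partial_isometry {W : Matrix p q ℝ} (hW : W * Wᵀ * W = W) :
    Wᵀ * Wᵀᵀ * Wᵀ = Wᵀ := by
  simpa [Matrix.mul_assoc] using congrArg transpose hW

/-- The Gram matrix of `B` minus that of `W * B` is itself a Gram matrix
when `W` is a partial isometry. -/
lemma gram_sub_gram_partial_isometry_mul [DecidableEq q] {W : Matrix p q ℝ}
    (hW : W * Wᵀ * W = W) (B : Matrix q s ℝ) :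
    Bᵀ * B - (W * B)ᵀ * (W * B) = ((1 - Wᵀ * W) * B)ᵀ * ((1 - Wᵀ * W) * B) := by
  have h : Wᵀ * (W * (Wᵀ * (W * B))) = Wᵀ * (W * B) := by
    rw [← Matrix.mul_assoc W Wᵀ, ← Matrix.mul_assoc (W * Wᵀ), hW]
  simp only [transpose_mul, transpose_sub, transpose_transpose, Matrix.mul_assoc,
    Matrix.sub_mul, Matrix.mul_sub, Matrix.one_mul, h]
  abel

lemma trace_gram_partial_isometry_mul_le [Fintype s] {W : Matrix p q ℝ}
    (hW : W * Wᵀ * W = W) (B : Matrix q s ℝ) :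
    ((W * B)ᵀ * (W * B)).trace ≤ (Bᵀ * B).trace := by
  classical
  have h := trace_transpose_mul_self_nonneg ((1 - Wᵀ * W) * B)
  rw [← gram_sub_gram_partial_isometry_mul hW, trace_sub] at h
  linarith

lemma diag_gram_partial_isometry_mul_le {W : Matrix p q ℝ}
    (hW : W * Wᵀ * W = W) (B : Matrix q s ℝ) (i : s) :
    ((W * B)ᵀ * (W * B)) i i ≤ (Bᵀ * B) i i := by
  classical
  have h : 0 ≤ (((1 - Wᵀ * W) * B)ᵀ * ((1 - Wᵀ * W) * B) : Matrix s s ℝ) i i := by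
    rw [mul_apply]
    exact Finset.sum_nonneg fun j _ => mul_self_nonneg _
  rw [← gram_sub_gram_partial_isometry_mul hW, Matrix.sub_apply] at h
  linarith

end PartialIsometry

section NuclearNorm

open Matrix

variable {n₁ n₂ : ℕ}

lemma frobNorm_sq (X : Matrix (Fin n₁) (Fin n₂) ℝ) : frobNorm X ^ 2 = (Xᵀ * X).trace := by
  rw [frobNorm, Real.sq_sqrt (by positivity), Finset.sum_comm]
  simp [trace, mul_apply, sq]

lemma nuclearNorm_nonneg (X : Matrix (Fin n₁) (Fin n₂) ℝ) : 0 ≤ nuclearNorm X :=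
  Finset.sum_nonneg fun _ _ => Real.sqrt_nonneg _

/-- An orthogonal matrix of left singular vectors. -/
lemma exists_orthogonal_diagonalization (X : Matrix (Fin n₁) (Fin n₂) ℝ) :
    ∃ U : Matrix (Fin n₁) (Fin n₁) ℝ, Uᵀ * U = 1 ∧ U * Uᵀ = 1 ∧
      X * Xᵀ = U * diagonal (fun i => singVals X i ^ 2) * Uᵀ := by
  have hX := isHermitian_mul_conjTranspose_self X
  refine ⟨hX.eigenvectorUnitary, ?_, ?_, ?_⟩
  · simpa [star_eq_conjTranspose] using Unitary.coe_star_mul_self hX.eigenvectorUnitary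
  · simpa [star_eq_conjTranspose] using Unitary.coe_mul_star_self hX.eigenvectorUnitary
  · have h (i : Fin n₁) : singVals X i ^ 2 = hX.eigenvalues i :=
      Real.sq_sqrt ((posSemidef_self_mul_conjTranspose X).eigenvalues_nonneg i)
    rw [funext h]
    exact hX.spectral_theorem

/-- Nuclear norm duality for partial isometries. -/
lemma trace_partial_isometry_le_nuclearNorm {C : Matrix (Fin n₁) (Fin n₂) ℝ}
    (hC : C * Cᵀ * C = C) (X : Matrix (Fin n₁) (Fin n₂) ℝ) :
    (Cᵀ * X).trace ≤ nuclearNorm X := by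
  obtain ⟨U, hU, hU', hX⟩ := exists_orthogonal_diagonalization X
  have h : (Cᵀ * X).trace = ((Cᵀ * U)ᵀ * (Xᵀ * U)).trace := by
    rw [← trace_transpose]
    simp only [transpose_mul, transpose_transpose]
    rw [Matrix.mul_assoc, trace_mul_comm Uᵀ]
    simp only [Matrix.mul_assoc, hU', Matrix.mul_one]
    rw [trace_mul_comm]
  rw [h]
  refine Finset.sum_le_sum fun i _ => ?_
  have hc := diag_gram_partial_isometry_mul_le (transpose_partial_isometry hC) U i
  rw [hU, one_apply_eq] at hc
  have hx : ((Xᵀ * U)ᵀ * (Xᵀ * U)) i i = singVals X i ^ 2 := by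
    have : (Xᵀ * U)ᵀ * (Xᵀ * U) = Uᵀ * (X * Xᵀ) * U := by
      simp [Matrix.mul_assoc]
    rw [this, hX]
    have : Uᵀ * (U * diagonal (fun i => singVals X i ^ 2) * Uᵀ) * U
        = (Uᵀ * U) * diagonal (fun i => singVals X i ^ 2) * (Uᵀ * U) := by
      simp only [Matrix.mul_assoc]
    rw [this, hU]
    simp
  have hs : 0 ≤ singVals X i := Real.sqrt_nonneg _
  refine abs_le_of_sq_le_sq' ?_ hs |>.2
  rw [← hx]
  simp only [diag_apply]
  rw [mul_apply, mul_apply] at *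
  simp only [transpose_apply (Xᵀ * U), transpose_apply (Cᵀ * U), ← sq] at *
  refine (Finset.sum_mul_sq_le_sq_mul_sq _ _ _).trans ?_
  exact mul_le_of_le_one_left (by positivity) hc

/-- The partial isometry of the polar decomposition of `X`. -/
lemma exists_polar_partial_isometry (X : Matrix (Fin n₁) (Fin n₂) ℝ) :
    ∃ W : Matrix (Fin n₁) (Fin n₂) ℝ, W * Wᵀ * W = W ∧ (Wᵀ * X).trace = nuclearNorm X ∧
      W * Wᵀ * X = X ∧ (W * Wᵀ).trace = X.rank ∧
      (∃ A : Matrix (Fin n₁) (Fin n₁) ℝ, W = A * X) ∧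
      ∃ B : Matrix (Fin n₂) (Fin n₂) ℝ, W = X * B := by
  obtain ⟨U, hU, hU', hX⟩ := exists_orthogonal_diagonalization X
  set σ := singVals X with hσ
  let f : (Fin n₁ → ℝ) → Matrix (Fin n₁) (Fin n₁) ℝ := fun d => U * diagonal d * Uᵀ
  have f_mul (d e) : f d * f e = f (d * e) := by
    have : f d * f e = U * diagonal d * (Uᵀ * U) * diagonal e * Uᵀ := by
      simp only [f, Matrix.mul_assoc]
    rw [this, hU, Matrix.mul_one, Matrix.mul_assoc U, diagonal_mul_diagonal]
    rfl
  have f_tr (d) : (f d)ᵀ = f d := by simp [f, Matrix.mul_assoc]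
  have f_trace (d) : (f d).trace = ∑ i, d i := by
    simp only [f]
    rw [trace_mul_comm, ← Matrix.mul_assoc, hU, Matrix.one_mul, trace_diagonal]
  have hX : X * Xᵀ = f (σ ^ 2) := hX
  have hWW : f σ⁻¹ * X * (f σ⁻¹ * X)ᵀ = f (σ⁻¹ * σ ^ 2 * σ⁻¹) := by
    rw [transpose_mul, f_tr, Matrix.mul_assoc, ← Matrix.mul_assoc X, hX, f_mul, f_mul, mul_assoc]
  have hPX : f (σ⁻¹ * σ ^ 2 * σ⁻¹) * X = X := by
    have : (X - f (σ⁻¹ * σ ^ 2 * σ⁻¹) * X) * (X - f (σ⁻¹ * σ ^ 2 * σ⁻¹) * X)ᴴ = 0 := by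
      rw [conjTranspose_eq_transpose_of_trivial, transpose_sub, transpose_mul, f_tr,
        Matrix.sub_mul, Matrix.mul_sub, Matrix.mul_sub]
      simp only [Matrix.mul_assoc]
      simp only [← Matrix.mul_assoc X, hX, f_mul]
      have e1 : σ ^ 2 * (σ⁻¹ * σ ^ 2 * σ⁻¹) = σ ^ 2 := by
        ext i; by_cases h : σ i = 0 <;> simp [h]; field_simp
      have e2 : (σ⁻¹ * σ ^ 2 * σ⁻¹) * σ ^ 2 = σ ^ 2 := by rw [mul_comm, e1]
      simp [e1, e2]
    rw [self_mul_conjTranspose_eq_zero, sub_eq_zero] at this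
    exact this.symm
  have hWWW : f σ⁻¹ * X * (f σ⁻¹ * X)ᵀ * (f σ⁻¹ * X) = f σ⁻¹ * X := by
    rw [hWW, ← Matrix.mul_assoc, f_mul]
    congr 2
    ext i; by_cases h : σ i = 0 <;> simp [h]; field_simp
  have hXW : X * (f σ⁻¹ * X)ᵀ = f (σ ^ 2 * σ⁻¹) := by
    rw [transpose_mul, f_tr, ← Matrix.mul_assoc, hX, f_mul]
  refine ⟨f σ⁻¹ * X, hWWW, ?_, by rw [hWW, hPX], ?_, ⟨_, rfl⟩, ?_⟩
  · rw [trace_mul_comm, hXW, f_trace]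
    refine Finset.sum_congr rfl fun i _ => ?_
    by_cases h : σ i = 0 <;> simp [h, ← hσ]; field_simp
  · rw [hWW, f_trace, ← rank_self_mul_conjTranspose,
      (isHermitian_mul_conjTranspose_self X).rank_eq_card_non_zero_eigs, Fintype.card_subtype,
      Finset.card_filter]
    push_cast
    refine Finset.sum_congr rfl fun i _ => ?_
    have hs : σ i = 0 ↔ (isHermitian_mul_conjTranspose_self X).eigenvalues i = 0 :=
      Real.sqrt_eq_zero ((posSemidef_self_mul_conjTranspose X).eigenvalues_nonneg i)
    generalize (isHermitian_mul_conjTranspose_self X).eigenvalues i = μ at hs ⊢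
    by_cases h : σ i = 0
    · simp [h, hs.1 h]
    · simp [mt hs.2 h]; field_simp
  · refine ⟨(f σ⁻¹ * X)ᵀ * f σ⁻¹ * f σ⁻¹ * X, ?_⟩
    simp only [← Matrix.mul_assoc, hXW, f_mul]
    congr 2
    ext i; by_cases h : σ i = 0 <;> simp [h]; field_simp

/-- A perturbation of a rank-`r` matrix that does not increase the nuclear norm has
`ℓ*`-rank at most `8 r`. -/
lemma nuclearNorm_sq_le_of_nuclearNorm_add_le {X H : Matrix (Fin n₁) (Fin n₂) ℝ}
    (h : nuclearNorm (X + H) ≤ nuclearNorm X) :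
    nuclearNorm H ^ 2 ≤ 8 * (X.rank : ℝ) * frobNorm H ^ 2 := by
  obtain ⟨W, hW, hWX, hPX, hr, -, -⟩ := exists_polar_partial_isometry X
  set P := W * Wᵀ with hP
  set Q := Wᵀ * W with hQ
  have hPt : Pᵀ = P := by simp [hP]
  have hQt : Qᵀ = Q := by simp [hQ]
  have hPP : P * P = P := by rw [hP, ← Matrix.mul_assoc, hW]
  have hQQ : Q * Q = Q := by rw [hQ, Matrix.mul_assoc, ← Matrix.mul_assoc W, hW]
  have hWQ : W * Q = W := by rw [hQ, ← Matrix.mul_assoc, hW]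
  set Hc := (1 - P) * H * (1 - Q) with hHc
  obtain ⟨V, hV, hVH, -, -, ⟨A', hA'⟩, ⟨B', hB'⟩⟩ := exists_polar_partial_isometry Hc
  obtain ⟨Z, hZ, hZH, -⟩ := exists_polar_partial_isometry H
  have hPV : P * V = 0 := by
    rw [hB', hHc]
    have : P * (1 - P) = 0 := by rw [Matrix.mul_sub, hPP, Matrix.mul_one, sub_self]
    simp only [← Matrix.mul_assoc, this, Matrix.zero_mul]
  have hVQ : V * Q = 0 := by
    rw [hA', hHc]
    have : (1 - Q) * Q = 0 := by rw [Matrix.sub_mul, hQQ, Matrix.one_mul, sub_self]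
    simp only [Matrix.mul_assoc, this, Matrix.mul_zero]
  have hWV : Wᵀ * V = 0 := by
    have : Wᵀ = Wᵀ * P := by rw [← hPt, ← transpose_mul, hW]
    rw [this, Matrix.mul_assoc, hPV, Matrix.mul_zero]
  have hVW : V * Wᵀ = 0 := by
    have : Wᵀ = Q * Wᵀ := by rw [← hQt, ← transpose_mul, hWQ]
    rw [this, ← Matrix.mul_assoc, hVQ, Matrix.zero_mul]
  have hWV' : W * Vᵀ = 0 := by simpa using congrArg transpose hVW
  have hVW' : Vᵀ * W = 0 := by simpa using congrArg transpose hWV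
  have hsum : (W + V) * (W + V)ᵀ * (W + V) = W + V := by
    simp only [transpose_add, Matrix.add_mul, Matrix.mul_add, hWV', hVW, ← hP, hW, hV, hPV,
      Matrix.zero_mul, Matrix.mul_assoc V, hVW', Matrix.mul_zero]
    simp
  have hVX : (Vᵀ * X).trace = 0 := by
    rw [← hPX, hP, ← Matrix.mul_assoc, ← Matrix.mul_assoc, hVW', Matrix.zero_mul, Matrix.zero_mul,
      trace_zero]
  have hVHc : (Vᵀ * H).trace = nuclearNorm Hc := by
    have hVl : Vᵀ * (1 - P) = Vᵀ := by
      rw [← hPt, Matrix.mul_sub, ← transpose_mul, hPV]; simp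
    have hVr : (1 - Q) * Vᵀ = Vᵀ := by
      rw [← hQt, Matrix.sub_mul, ← transpose_mul, hVQ]; simp
    rw [← hVH, hHc, ← Matrix.mul_assoc, ← Matrix.mul_assoc, hVl,
      trace_mul_comm (Vᵀ * H), ← Matrix.mul_assoc, hVr]
  have hcone : nuclearNorm Hc ≤ -(Wᵀ * H).trace := by
    have h1 := (trace_partial_isometry_le_nuclearNorm hsum (X + H)).trans h
    simp only [transpose_add, Matrix.add_mul, Matrix.mul_add, trace_add, hVX, hVHc, hWX] at h1
    linarith
  set K := P * Z + (1 - P) * (Z * Q) with hK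
  have hZK : (Zᵀ * H).trace = (Kᵀ * H).trace + (Zᵀ * Hc).trace := by
    have e : (((1 - P) * (Z * Q))ᵀ * H).trace = (Zᵀ * ((1 - P) * H * Q)).trace := by
      rw [transpose_mul, transpose_mul, hQt, transpose_sub, hPt, transpose_one, Matrix.mul_assoc,
        Matrix.mul_assoc, trace_mul_comm]
      simp only [Matrix.mul_assoc]
    rw [hK, transpose_add, Matrix.add_mul, trace_add, e, transpose_mul, hPt, Matrix.mul_assoc,
      ← trace_add, ← trace_add, ← Matrix.mul_add, ← Matrix.mul_add, hHc]
    congr 2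
    simp only [Matrix.mul_sub, Matrix.sub_mul, Matrix.mul_one, Matrix.one_mul]
    abel
  have hPr : (Pᵀ * P).trace = X.rank := by rw [hPt, hPP, hr]
  have hQr : (Qᵀ * Q).trace = X.rank := by rw [hQt, hQQ, hQ, trace_mul_comm, ← hr]
  have hWr : (Wᵀ * W).trace = X.rank := by rw [trace_mul_comm, ← hr]
  have hK1 : ((P * Z)ᵀ * (P * Z)).trace ≤ (X.rank : ℝ) := by
    have := trace_gram_partial_isometry_mul_le (transpose_partial_isometry hZ) P
    rw [hPr] at this
    rw [trace_mul_comm]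
    simpa [transpose_mul, hPt] using this
  have hK2 : (((1 - P) * (Z * Q))ᵀ * ((1 - P) * (Z * Q))).trace ≤ (X.rank : ℝ) := by
    have hPc : (1 - P) * (1 - P)ᵀ * (1 - P) = 1 - P := by
      simp [hPt, Matrix.mul_sub, Matrix.sub_mul, hPP]
    have h1 := trace_gram_partial_isometry_mul_le hPc (Z * Q)
    have h2 := trace_gram_partial_isometry_mul_le hZ Q
    linarith
  have hKK : (Kᵀ * K).trace ≤ 2 * (X.rank : ℝ) := by
    have o : (P * Z)ᵀ * ((1 - P) * (Z * Q)) = 0 := by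
      rw [transpose_mul, hPt, Matrix.mul_assoc, ← Matrix.mul_assoc P, Matrix.mul_sub, hPP]
      simp
    have o' : ((1 - P) * (Z * Q))ᵀ * (P * Z) = 0 := by
      simpa only [transpose_mul, transpose_transpose, transpose_zero] using congrArg transpose o
    rw [hK, transpose_add, Matrix.add_mul, Matrix.mul_add, Matrix.mul_add, o, o', add_zero,
      zero_add, trace_add]
    linarith
  have hKW : ((K - W)ᵀ * (K - W)).trace ≤ 8 * (X.rank : ℝ) := by
    have h1 := trace_transpose_mul_self_nonneg (K + W)
    have h2 : (0 : ℝ) ≤ X.rank := Nat.cast_nonneg _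
    simp only [transpose_add, transpose_sub, Matrix.add_mul, Matrix.mul_add, Matrix.sub_mul,
      Matrix.mul_sub, trace_add, trace_sub] at h1 ⊢
    linarith
  have hle : nuclearNorm H ≤ ((K - W)ᵀ * H).trace := by
    have := trace_partial_isometry_le_nuclearNorm hZ Hc
    rw [transpose_sub, Matrix.sub_mul, trace_sub]
    linarith
  calc nuclearNorm H ^ 2 ≤ ((K - W)ᵀ * H).trace ^ 2 :=
        pow_le_pow_left₀ (nuclearNorm_nonneg H) hle 2
    _ ≤ ((K - W)ᵀ * (K - W)).trace * (Hᵀ * H).trace := trace_transpose_mul_sq_le _ _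
    _ ≤ 8 * (X.rank : ℝ) * frobNorm H ^ 2 := by
        rw [frobNorm_sq]
        exact mul_le_mul_of_nonneg_right hKW (trace_transpose_mul_self_nonneg H)

end NuclearNorm

lemma vnorm_eq_norm {m : ℕ} (v : Fin m → ℝ) : vnorm v = ‖WithLp.toLp 2 v‖ := by
  simp [vnorm, EuclideanSpace.norm_eq]

lemma vnorm_sub_le {m : ℕ} (u v : Fin m → ℝ) : vnorm (u - v) ≤ vnorm u + vnorm v := by
  simpa only [vnorm_eq_norm, WithLp.toLp_sub] using norm_sub_le _ _

lemma frobNorm_pos {n₁ n₂ : ℕ} {X : Matrix (Fin n₁) (Fin n₂) ℝ} (hX : X ≠ 0) :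
    0 < frobNorm X := by
  refine (Real.sqrt_nonneg _).lt_of_ne fun h => hX ?_
  have h2 := frobNorm_sq X
  rw [frobNorm, ← h, zero_pow two_ne_zero] at h2
  rwa [eq_comm, ← Matrix.conjTranspose_eq_transpose_of_trivial,
    Matrix.trace_conjTranspose_mul_self_eq_zero_iff] at h2

lemma cmsvMin_mul_frobNorm_le {n₁ n₂ m : ℕ} (A : Matrix (Fin n₁) (Fin n₂) ℝ → (Fin m → ℝ))
    {τ : ℝ} {X : Matrix (Fin n₁) (Fin n₂) ℝ} (hX : X ≠ 0) (hτ : lstarRank X ≤ τ) :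
    cmsvMin A τ * frobNorm X ≤ vnorm (A X) := by
  rw [← le_div_iff₀ (frobNorm_pos hX)]
  refine csInf_le ⟨0, ?_⟩ ⟨X, hX, hτ, rfl⟩
  rintro _ ⟨Y, -, -, rfl⟩
  exact div_nonneg (Real.sqrt_nonneg _) (Real.sqrt_nonneg _)

/-- stability of matrix Basis Pursuit. -/
theorem stmt6 {n₁ n₂ m : ℕ} (hn : n₁ ≤ n₂)
    (𝒜 : Matrix (Fin n₁) (Fin n₂) ℝ →ₗ[ℝ] (Fin m → ℝ))
    (X : Matrix (Fin n₁) (Fin n₂) ℝ) (r : ℕ) (hrank : X.rank = r)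
    (w : Fin m → ℝ) (ε : ℝ) (hw : vnorm w ≤ ε)
    (y : Fin m → ℝ) (hy : y = 𝒜 X + w)
    (hρ : 0 < cmsvMin (⇑𝒜) (8 * (r : ℝ)))
    (Xhat : Matrix (Fin n₁) (Fin n₂) ℝ)
    (hfeas : vnorm (y - 𝒜 Xhat) ≤ ε)
    (hopt : ∀ Z : Matrix (Fin n₁) (Fin n₂) ℝ,
      vnorm (y - 𝒜 Z) ≤ ε → nuclearNorm Xhat ≤ nuclearNorm Z) :
    frobNorm (Xhat - X) ≤ 2 * ε / cmsvMin (⇑𝒜) (8 * (r : ℝ)) := by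
  rw [le_div_iff₀ hρ, mul_comm]
  have hε : 0 ≤ ε := (Real.sqrt_nonneg _).trans hw
  by_cases hH : Xhat - X = 0
  · rw [hH]
    simpa [frobNorm] using hε
  have hX : y - 𝒜 X = w := by rw [hy, add_sub_cancel_left]
  have hle := hopt X (by rwa [hX])
  have hsq := nuclearNorm_sq_le_of_nuclearNorm_add_le (X := X) (H := Xhat - X)
    (by rwa [add_sub_cancel])
  have hτ : lstarRank (Xhat - X) ≤ 8 * (r : ℝ) := by
    rw [lstarRank, div_le_iff₀ (pow_pos (frobNorm_pos hH) 2), ← hrank]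
    exact hsq
  have hdiff : 𝒜 (Xhat - X) = w - (y - 𝒜 Xhat) := by
    rw [map_sub, hy]
    abel
  calc cmsvMin (⇑𝒜) (8 * (r : ℝ)) * frobNorm (Xhat - X) ≤ vnorm (𝒜 (Xhat - X)) :=
        cmsvMin_mul_frobNorm_le _ hH hτ
    _ ≤ vnorm w + vnorm (y - 𝒜 Xhat) := hdiff ▸ vnorm_sub_le _ _
    _ ≤ 2 * ε := by linarith

end
end
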